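/- Let β ∈ (0,n) and f ∈ L^1(H^β_∞). Then there exists a constant C = C(β,n) > 0 such that for all t > 0, H^β_∞({x ∈ ℝ^n : M_{H^β_∞} f(x) > t}) ≤ (C/t) ∫ |f| dH^β_∞. -/

import Mathlib

open scoped ENNReal
open Metric Set MeasureTheory

noncomputable section

/-- `ℝⁿ` as Euclidean space. -/
abbrev Rn (n : ℕ) := EuclideanSpace ℝ (Fin n)

/-- The Choquet integral of a nonnegative function `g` with respect to a
(monotone) set function `C`: `∫ g dC := ∫_0^∞ C({g > t}) dt`. -/
noncomputable def choquet {X : Type*} (C : Set X → ℝ≥0∞) (g : X → ℝ≥0∞) : ℝ≥0∞ :=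
  ∫⁻ t in Ioi (0 : ℝ), C {x | ENNReal.ofReal t < g x}

/-- The Choquet integral of `g` restricted to a set `A`. -/
noncomputable def choquetOn {X : Type*} (C : Set X → ℝ≥0∞) (A : Set X) (g : X → ℝ≥0∞) : ℝ≥0∞ :=
  ∫⁻ t in Ioi (0 : ℝ), C {x | x ∈ A ∧ ENNReal.ofReal t < g x}

/-- The `L^∞(C)` norm: `inf {λ > 0 : C({|f| > λ}) = 0}` (formulated in `ℝ≥0∞`). -/
noncomputable def choquetEssSup {X : Type*} (C : Set X → ℝ≥0∞) (f : X → ℝ) : ℝ≥0∞ :=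
  sInf {l : ℝ≥0∞ | C {x | l < ENNReal.ofReal |f x|} = 0}

/-- `C`-quasicontinuity of a function `f`. -/
def QuasiCont {X : Type*} [TopologicalSpace X] (C : Set X → ℝ≥0∞) (f : X → ℝ) : Prop :=
  ∀ ε : ℝ≥0∞, 0 < ε → ∃ U : Set X, IsOpen U ∧ C U < ε ∧ ContinuousOn f Uᶜ

/-- Membership in the capacitary space `L^p(C)`: `C`-quasicontinuous with
finite `p`-th power Choquet integral. -/
def MemChoquetLp {X : Type*} [TopologicalSpace X] (C : Set X → ℝ≥0∞) (p : ℝ) (f : X → ℝ) : Prop :=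
  QuasiCont C f ∧ choquet C (fun x => ENNReal.ofReal |f x| ^ p) < ∞

/-- The normalization constant `ω_β = π^{β/2}/Γ(β/2+1)`. -/
noncomputable def omegaC (β : ℝ) : ℝ≥0∞ :=
  ENNReal.ofReal (Real.pi ^ (β / 2) / Real.Gamma (β / 2 + 1))

/-- The `β`-dimensional Hausdorff content `H^β_∞`, defined via countable
coverings by balls: `inf {∑ ω_β r_i^β : E ⊆ ⋃ B(x_i, r_i)}`. -/
noncomputable def hContent (n : ℕ) (β : ℝ) (E : Set (Rn n)) : ℝ≥0∞ :=
  ⨅ (c : ℕ → Rn n × ℝ) (_ : E ⊆ ⋃ i, ball (c i).1 (c i).2),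
    ∑' i, omegaC β * ENNReal.ofReal ((c i).2 ^ β)

/-- The centered Hausdorff content maximal function
`M_{H^β_∞} g(x) := sup_{r>0} (1/(ω_β r^β)) ∫_{B(x,r)} g dH^β_∞`. -/
noncomputable def maximalH (n : ℕ) (β : ℝ) (g : Rn n → ℝ≥0∞) (x : Rn n) : ℝ≥0∞ :=
  ⨆ (r : ℝ) (_ : 0 < r),
    (omegaC β * ENNReal.ofReal (r ^ β))⁻¹ * choquetOn (hContent n β) (ball x r) g

lemma omegaC_ne_zero {β : ℝ} (hβ : 0 < β) : omegaC β ≠ 0 := by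
  have h := Real.Gamma_pos_of_pos (s := β / 2 + 1) (by positivity)
  exact (ENNReal.ofReal_pos.2 (by positivity)).ne'

lemma omegaC_ne_top (β : ℝ) : omegaC β ≠ ∞ := ENNReal.ofReal_ne_top

lemma hContent_mono (n : ℕ) (β : ℝ) : Monotone (hContent n β) := fun _ _ h =>
  le_iInf₂ fun c hc => iInf₂_le c (h.trans hc)

/-- Countable coverings indexed by an arbitrary countable type bound the Hausdorff content. -/
lemma hContent_le_tsum {n : ℕ} {β : ℝ} (hβ : 0 < β) {ι : Type*} [Countable ι]
    {E : Set (Rn n)} (x : ι → Rn n) (r : ι → ℝ) (h : E ⊆ ⋃ i, ball (x i) (r i)) :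
    hContent n β E ≤ ∑' i, omegaC β * ENNReal.ofReal (r i ^ β) := by
  obtain ⟨e, he⟩ := exists_injective_nat ι
  let c : ℕ → Rn n × ℝ := Function.extend e (fun i => (x i, r i)) fun _ => (0, 0)
  have hc : ∀ i, c (e i) = (x i, r i) := fun i => he.extend_apply _ _ i
  have hE : E ⊆ ⋃ k, ball (c k).1 (c k).2 := fun y hy => by
    obtain ⟨i, hi⟩ := mem_iUnion.1 (h hy)
    exact mem_iUnion.2 ⟨e i, by rwa [hc]⟩
  refine (iInf₂_le c hE).trans_eq ?_
  rw [← he.tsum_eq]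
  · simp only [hc]
  · intro k hk
    by_contra hke
    have : c k = (0, 0) := Function.extend_apply' _ _ _ (by simpa using hke)
    simp [this, Real.zero_rpow hβ.ne'] at hk

lemma hContent_ball_le {n : ℕ} {β : ℝ} (hβ : 0 < β) (x : Rn n) (r : ℝ) :
    hContent n β (ball x r) ≤ omegaC β * ENNReal.ofReal (r ^ β) := by
  simpa using hContent_le_tsum hβ (ι := Unit) (fun _ => x) (fun _ => r)
    (subset_iUnion (fun _ : Unit => ball x r) ())

/-- Sets of content less than `M` have a covering of cost less than `M` with nonnegative radii. -/
lemma exists_cover_of_hContent_lt {n : ℕ} {β : ℝ} (hβ : 0 < β) {E : Set (Rn n)} {M : ℝ≥0∞}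
    (h : hContent n β E < M) :
    ∃ (x : ℕ → Rn n) (r : ℕ → ℝ), (∀ i, 0 ≤ r i) ∧ (E ⊆ ⋃ i, ball (x i) (r i)) ∧
      ∑' i, omegaC β * ENNReal.ofReal (r i ^ β) < M := by
  simp only [hContent, iInf_lt_iff] at h
  obtain ⟨c, hE, hc⟩ := h
  refine ⟨fun i => (c i).1, fun i => max (c i).2 0, fun i => le_max_right _ _,
    hE.trans (iUnion_mono fun i => ball_subset_ball (le_max_left _ _)), lt_of_le_of_lt ?_ hc⟩
  refine ENNReal.tsum_le_tsum fun i => ?_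
  rcases le_total 0 (c i).2 with h0 | h0
  · simp [h0]
  · simp [h0, Real.zero_rpow hβ.ne']

lemma tsum_level_le_lintegral {φ : ℝ → ℝ≥0∞} (hφ : Antitone φ) {τ : ℝ} (hτ : 0 < τ) :
    ∑' k : ℕ, ENNReal.ofReal (τ * 2 ^ k) * φ (τ * 2 ^ k) ≤ 2 * ∫⁻ s in Ioi (0 : ℝ), φ s := by
  let a : ℕ → ℝ := fun k => τ * 2 ^ k / 2
  have ha : Monotone a := fun i j hij => by
    have : (2 : ℝ) ^ i ≤ 2 ^ j := pow_le_pow_right₀ one_le_two hij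
    simp only [a]
    gcongr
  have hterm : ∀ k : ℕ, ENNReal.ofReal (τ * 2 ^ k) * φ (τ * 2 ^ k) ≤
      2 * ∫⁻ s in Ioc (a k) (a (Order.succ k)), φ s := fun k => by
    have hs : a (Order.succ k) = τ * 2 ^ k := by simp only [a, Nat.succ_eq_succ, pow_succ]; ring
    calc ENNReal.ofReal (τ * 2 ^ k) * φ (τ * 2 ^ k)
        = 2 * ∫⁻ _ in Ioc (a k) (a (Order.succ k)), φ (τ * 2 ^ k) := by
          rw [setLIntegral_const, Real.volume_Ioc, hs, mul_comm (φ _), ← mul_assoc]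
          congr 1
          rw [← ENNReal.ofReal_ofNat 2, ← ENNReal.ofReal_mul zero_le_two]
          congr 1
          simp only [a]
          ring
      _ ≤ _ := by
          gcongr 2 * ?_
          exact setLIntegral_mono' measurableSet_Ioc fun s hsm => hφ (hsm.2.trans_eq hs)
  calc _ ≤ ∑' k : ℕ, 2 * ∫⁻ s in Ioc (a k) (a (Order.succ k)), φ s :=
        ENNReal.tsum_le_tsum hterm
    _ = 2 * ∫⁻ s in ⋃ k, Ioc (a k) (a (Order.succ k)), φ s := by
        rw [ENNReal.tsum_mul_left,
          lintegral_iUnion (fun _ => measurableSet_Ioc) ha.pairwise_disjoint_on_Ioc_succ]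
    _ ≤ _ := by
        gcongr 2 * ?_
        refine lintegral_mono_set (iUnion_subset fun k s hs => ?_)
        exact lt_of_lt_of_le' hs.1 (by positivity)

lemma lintegral_le_add_tsum_level {φ : ℝ → ℝ≥0∞} (hφ : Antitone φ) {τ : ℝ} (hτ : 0 < τ)
    {A : ℝ≥0∞} (hA : ∀ s, φ s ≤ A) :
    ∫⁻ s in Ioi (0 : ℝ), φ s ≤
      ENNReal.ofReal τ * A + ∑' k : ℕ, ENNReal.ofReal (τ * 2 ^ k) * φ (τ * 2 ^ k) := by
  have hcov : Ioi (0 : ℝ) ⊆ Ioc 0 τ ∪ ⋃ k : ℕ, Icc (τ * 2 ^ k) (τ * 2 ^ (k + 1)) := fun s hs => by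
    rcases le_or_gt s τ with h | h
    · exact Or.inl ⟨hs, h⟩
    · right
      obtain ⟨k, hk1, hk2⟩ := exists_nat_pow_near ((one_le_div hτ).2 h.le) one_lt_two
      refine mem_iUnion.2 ⟨k, ?_, ?_⟩
      · rw [le_div_iff₀ hτ] at hk1
        linarith
      · rw [div_lt_iff₀ hτ] at hk2
        linarith
  refine (lintegral_mono_set hcov).trans ((lintegral_union_le _ _ _).trans (add_le_add ?_ ?_))
  · calc _ ≤ ∫⁻ _ in Ioc 0 τ, A := lintegral_mono hA
      _ = _ := by rw [setLIntegral_const, Real.volume_Ioc, sub_zero, mul_comm]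
  · refine (lintegral_iUnion_le _ _).trans (ENNReal.tsum_le_tsum fun k => ?_)
    calc _ ≤ ∫⁻ _ in Icc (τ * 2 ^ k) (τ * 2 ^ (k + 1)), φ (τ * 2 ^ k) :=
          setLIntegral_mono' measurableSet_Icc fun s hs => hφ hs.1
      _ = _ := by
          rw [setLIntegral_const, Real.volume_Icc, mul_comm]
          congr 2
          ring

/-- The weak-type bound for the fractional maximal function of a finite measure, with respect to
Hausdorff content. -/
lemma mul_hContent_le_of_le_measure_closedBall {n : ℕ} {β : ℝ} (hβ : 0 < β)
    (μ : Measure (Rn n)) [IsFiniteMeasure μ] {τ : ℝ} (hτ : 0 < τ) {A : Set (Rn n)}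
    (h : ∀ x ∈ A, ∃ r : ℝ, 0 < r ∧
      ENNReal.ofReal τ * (omegaC β * ENNReal.ofReal (r ^ β)) ≤ μ (closedBall x (2 * r))) :
    ENNReal.ofReal τ * hContent n β A ≤ ENNReal.ofReal (11 ^ β) * μ univ := by
  choose! r hr hμ using h
  set w : ℝ := (omegaC β).toReal with hw
  have hw0 : 0 < w := ENNReal.toReal_pos (omegaC_ne_zero hβ) (omegaC_ne_top β)
  set R : ℝ := ((μ univ).toReal / (τ * w)) ^ β⁻¹
  have hrR : ∀ x ∈ A, 2 * r x ≤ 2 * R := fun x hx => by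
    have h1 := (hμ x hx).trans (measure_mono (subset_univ _))
    have h2 := ENNReal.toReal_mono (measure_ne_top μ univ) h1
    have h3 := Real.rpow_nonneg (hr x hx).le β
    rw [ENNReal.toReal_mul, ENNReal.toReal_mul, ENNReal.toReal_ofReal hτ.le,
      ENNReal.toReal_ofReal h3, ← hw, ← mul_assoc, mul_comm] at h2
    have h4 := (le_div_iff₀ (by positivity)).2 h2
    have h5 := Real.rpow_le_rpow h3 h4 (inv_nonneg.2 hβ.le)
    rw [Real.rpow_rpow_inv (hr x hx).le hβ.ne'] at h5
    linarith
  obtain ⟨u, huA, hdisj, hcov⟩ := Vitali.exists_disjoint_subfamily_covering_enlargement_closedBall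
    A (fun x => x) (fun x => 2 * r x) (2 * R) hrR 5 (by norm_num)
  have hu : u.Countable := hdisj.countable_of_nonempty_interior fun x hx =>
    (nonempty_ball.2 (mul_pos two_pos (hr x (huA hx)))).mono ball_subset_interior_closedBall
  have : Countable u := hu
  have hA : A ⊆ ⋃ i : u, ball (i : Rn n) (11 * r i) := fun x hx => by
    obtain ⟨b, hb, hsub⟩ := hcov x hx
    refine mem_iUnion.2 ⟨⟨b, hb⟩, ?_⟩
    have hxb := hsub (mem_closedBall_self (mul_pos two_pos (hr x hx)).le)
    rw [mem_closedBall] at hxb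
    rw [mem_ball]
    have := hr b (huA hb)
    dsimp only
    linarith
  calc ENNReal.ofReal τ * hContent n β A
      ≤ ENNReal.ofReal τ * ∑' i : u, omegaC β * ENNReal.ofReal ((11 * r i) ^ β) := by
        gcongr
        exact hContent_le_tsum hβ _ _ hA
    _ = ENNReal.ofReal (11 ^ β) *
          ∑' i : u, ENNReal.ofReal τ * (omegaC β * ENNReal.ofReal (r i ^ β)) := by
        rw [← ENNReal.tsum_mul_left, ← ENNReal.tsum_mul_left]
        refine tsum_congr fun i => ?_
        rw [Real.mul_rpow (by norm_num) (hr i (huA i.2)).le, ENNReal.ofReal_mul (by positivity)]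
        ring
    _ ≤ ENNReal.ofReal (11 ^ β) * ∑' i : u, μ (closedBall (i : Rn n) (2 * r i)) := by
        gcongr with i
        exact hμ i (huA i.2)
    _ ≤ ENNReal.ofReal (11 ^ β) * μ univ := by
        gcongr
        refine (tsum_meas_le_meas_iUnion_of_disjoint μ (fun _ => measurableSet_closedBall) ?_).trans
          (measure_mono (subset_univ _))
        exact fun i j hij => hdisj i.2 j.2 (Subtype.coe_injective.ne hij)

lemma hContent_union_le {n : ℕ} {β : ℝ} (hβ : 0 < β) (E F : Set (Rn n)) :
    hContent n β (E ∪ F) ≤ hContent n β E + hContent n β F := by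
  refine ENNReal.le_of_forall_pos_le_add fun ε hε htop => ?_
  have hE : hContent n β E ≠ ∞ := (le_self_add.trans_lt htop).ne
  have hF : hContent n β F ≠ ∞ := (le_add_self.trans_lt htop).ne
  have hε' : (ε / 2 : ℝ≥0∞) ≠ 0 := by simp [hε.ne']
  obtain ⟨x, r, -, hx, hxr⟩ := exists_cover_of_hContent_lt hβ (ENNReal.lt_add_right hE hε')
  obtain ⟨y, s, -, hy, hys⟩ := exists_cover_of_hContent_lt hβ (ENNReal.lt_add_right hF hε')
  refine (hContent_le_tsum hβ (Sum.elim x y) (Sum.elim r s) ?_).trans ?_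
  · rw [iUnion_sum]
    exact union_subset_union hx hy
  · rw [Summable.tsum_sum ENNReal.summable ENNReal.summable]
    refine (add_le_add hxr.le hys.le).trans_eq ?_
    rw [add_add_add_comm, ENNReal.add_halves]

lemma lt_choquetOn_of_lt_maximalH {n : ℕ} {β : ℝ} (hβ : 0 < β) {g : Rn n → ℝ≥0∞} {x : Rn n}
    {t : ℝ≥0∞} (h : t < maximalH n β g x) :
    ∃ r : ℝ, 0 < r ∧
      t * (omegaC β * ENNReal.ofReal (r ^ β)) < choquetOn (hContent n β) (ball x r) g := by
  simp only [maximalH, lt_iSup_iff] at h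
  obtain ⟨r, hr, h⟩ := h
  refine ⟨r, hr, ?_⟩
  have h0 : ENNReal.ofReal (r ^ β) ≠ 0 := (ENNReal.ofReal_pos.2 (by positivity)).ne'
  rw [mul_comm, ← div_eq_mul_inv] at h
  exact (ENNReal.lt_div_iff_mul_lt (Or.inl (mul_ne_zero (omegaC_ne_zero hβ) h0))
    (Or.inl (ENNReal.mul_ne_top (omegaC_ne_top β) ENNReal.ofReal_ne_top))).1 h

/-- If `E` is covered by balls and `x` lies in none of the doubled balls, then only the balls
centered near `x` contribute to the content of `ball x r ∩ E`. -/
lemma hContent_ball_inter_le {n : ℕ} {β : ℝ} (hβ : 0 < β) {E : Set (Rn n)} {z : ℕ → Rn n}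
    {ρ : ℕ → ℝ} (hE : E ⊆ ⋃ i, ball (z i) (ρ i)) {x : Rn n} {r : ℝ}
    (hx : ∀ i, x ∉ ball (z i) (2 * ρ i)) :
    hContent n β (ball x r ∩ E) ≤ ∑' i, omegaC β * ENNReal.ofReal (ρ i ^ β) *
      (closedBall x (2 * r)).indicator 1 (z i) := by
  classical
  let s : ℕ → ℝ := fun i => if z i ∈ closedBall x (2 * r) then ρ i else 0
  refine (hContent_le_tsum hβ z s fun y hy => ?_).trans_eq (tsum_congr fun i => ?_)
  · obtain ⟨i, hi⟩ := mem_iUnion.1 (hE hy.2)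
    refine mem_iUnion.2 ⟨i, ?_⟩
    have hxi := hx i
    have hy1 := hy.1
    have htri := dist_triangle_left x (z i) y
    rw [mem_ball] at hy1 hxi hi
    have hz : z i ∈ closedBall x (2 * r) := by
      rw [mem_closedBall, dist_comm]
      linarith
    simpa only [s, if_pos hz, mem_ball] using hi
  · by_cases hz : z i ∈ closedBall x (2 * r)
    · simp only [s, if_pos hz, indicator_of_mem hz, Pi.one_apply, mul_one]
    · simp only [s, if_neg hz, indicator_of_notMem hz, Real.zero_rpow hβ.ne', ENNReal.ofReal_zero,
        mul_zero]

lemma choquet_levels_antitone {n : ℕ} (β : ℝ) (A : Set (Rn n)) (g : Rn n → ℝ≥0∞) :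
    Antitone fun s : ℝ => hContent n β {x | x ∈ A ∧ ENNReal.ofReal s < g x} := fun _ _ hst =>
  hContent_mono n β fun _ hx => ⟨hx.1, (ENNReal.ofReal_le_ofReal hst).trans_lt hx.2⟩

/-- The weak-type bound in terms of near-optimal coverings of the dyadic superlevel sets. -/
lemma mul_hContent_maximalH_le_of_cover {n : ℕ} {β : ℝ} (hβ : 0 < β) {g : Rn n → ℝ≥0∞} {τ : ℝ}
    (hτ : 0 < τ) (z : ℕ → ℕ → Rn n) (ρ : ℕ → ℕ → ℝ) (hρ : ∀ k i, 0 ≤ ρ k i)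
    (hcov : ∀ k, {x | ENNReal.ofReal (τ * 2 ^ k) < g x} ⊆ ⋃ i, ball (z k i) (ρ k i)) :
    ENNReal.ofReal τ * hContent n β {x | ENNReal.ofReal (2 * τ) < maximalH n β g x} ≤
      (ENNReal.ofReal (2 ^ β) + ENNReal.ofReal (11 ^ β)) * ∑' k : ℕ, ENNReal.ofReal (τ * 2 ^ k) *
        ∑' i, omegaC β * ENNReal.ofReal (ρ k i ^ β) := by
  set S : ℝ≥0∞ := ∑' k : ℕ, ENNReal.ofReal (τ * 2 ^ k) *
    ∑' i, omegaC β * ENNReal.ofReal (ρ k i ^ β) with hS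
  rcases eq_or_ne S ∞ with hStop | hStop
  · rw [hStop, ENNReal.mul_top (by positivity)]
    exact le_top
  let m : ℕ × ℕ → ℝ≥0∞ := fun p =>
    ENNReal.ofReal (τ * 2 ^ p.1) * (omegaC β * ENNReal.ofReal (ρ p.1 p.2 ^ β))
  have hm : ∑' p, m p = S := by
    rw [ENNReal.tsum_prod', hS]
    simp only [m, ENNReal.tsum_mul_left]
  let μ : Measure (Rn n) := Measure.sum fun p : ℕ × ℕ => m p • Measure.dirac (z p.1 p.2)
  have hμ : ∀ s, MeasurableSet s →
      μ s = ∑' p : ℕ × ℕ, m p * s.indicator 1 (z p.1 p.2) := fun s hs => by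
    simp [μ, Measure.sum_apply _ hs, Measure.dirac_apply' _ hs]
  have hμu : μ univ = S := by rw [hμ _ .univ, ← hm]; simp
  have : IsFiniteMeasure μ := ⟨by rw [hμu]; exact hStop.lt_top⟩
  set D : Set (Rn n) := ⋃ p : ℕ × ℕ, ball (z p.1 p.2) (2 * ρ p.1 p.2)
  set G : Set (Rn n) := {x | ENNReal.ofReal (2 * τ) < maximalH n β g x}
  have hDle : ENNReal.ofReal τ * hContent n β D ≤ ENNReal.ofReal (2 ^ β) * S := by
    calc _ ≤ ENNReal.ofReal τ *
          ∑' p : ℕ × ℕ, omegaC β * ENNReal.ofReal ((2 * ρ p.1 p.2) ^ β) := by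
          gcongr
          exact hContent_le_tsum hβ _ _ subset_rfl
      _ ≤ _ := by
          rw [← hm, ← ENNReal.tsum_mul_left, ← ENNReal.tsum_mul_left]
          refine ENNReal.tsum_le_tsum fun p => ?_
          rw [Real.mul_rpow zero_le_two (hρ _ _), ENNReal.ofReal_mul (by positivity)]
          calc _ = ENNReal.ofReal (2 ^ β) *
                (ENNReal.ofReal τ * (omegaC β * ENNReal.ofReal (ρ p.1 p.2 ^ β))) := by ring
            _ ≤ _ := by
                simp only [m]
                gcongr
                exact le_mul_of_one_le_right hτ.le (one_le_pow₀ one_le_two)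
  have hGD : ENNReal.ofReal τ * hContent n β (G \ D) ≤ ENNReal.ofReal (11 ^ β) * S := by
    rw [← hμu]
    refine mul_hContent_le_of_le_measure_closedBall hβ μ hτ fun x hx => ?_
    obtain ⟨r, hr, hlt⟩ := lt_choquetOn_of_lt_maximalH hβ hx.1
    refine ⟨r, hr, ?_⟩
    set W : ℝ≥0∞ := omegaC β * ENNReal.ofReal (r ^ β)
    have hxD : ∀ k i, x ∉ ball (z k i) (2 * ρ k i) := fun k i hk =>
      hx.2 (mem_iUnion.2 ⟨(k, i), hk⟩)
    have hup := lintegral_le_add_tsum_level (choquet_levels_antitone β (ball x r) g) hτ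
      (A := W) fun s => (hContent_mono n β fun _ hy => hy.1).trans (hContent_ball_le hβ x r)
    have hlt' := hlt.trans_le hup
    have hWtop : ENNReal.ofReal τ * W ≠ ∞ := ENNReal.mul_ne_top ENNReal.ofReal_ne_top
      (ENNReal.mul_ne_top (omegaC_ne_top β) ENNReal.ofReal_ne_top)
    rw [two_mul, ENNReal.ofReal_add hτ.le hτ.le, add_mul, ENNReal.add_lt_add_iff_left hWtop]
      at hlt'
    refine hlt'.le.trans ?_
    rw [hμ _ measurableSet_closedBall, ENNReal.tsum_prod']
    refine ENNReal.tsum_le_tsum fun k => ?_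
    simp only [m, mul_assoc (ENNReal.ofReal (τ * 2 ^ k)), ENNReal.tsum_mul_left]
    gcongr
    exact hContent_ball_inter_le hβ (hcov k) (hxD k)
  calc _ ≤ ENNReal.ofReal τ * (hContent n β D + hContent n β (G \ D)) := by
        gcongr
        refine (hContent_mono n β ?_).trans (hContent_union_le hβ _ _)
        rw [union_sdiff_self]
        exact subset_union_right
    _ ≤ _ := by
        rw [mul_add, add_mul]
        exact add_le_add hDle hGD

lemma mul_hContent_maximalH_le {n : ℕ} {β : ℝ} (hβ : 0 < β) (g : Rn n → ℝ≥0∞) {τ : ℝ}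
    (hτ : 0 < τ) :
    ENNReal.ofReal τ * hContent n β {x | ENNReal.ofReal (2 * τ) < maximalH n β g x} ≤
      (ENNReal.ofReal (2 ^ β) + ENNReal.ofReal (11 ^ β)) * (2 * choquet (hContent n β) g) := by
  set K : ℝ≥0∞ := ENNReal.ofReal (2 ^ β) + ENNReal.ofReal (11 ^ β)
  have hKtop : K ≠ ∞ := ENNReal.add_ne_top.2 ⟨ENNReal.ofReal_ne_top, ENNReal.ofReal_ne_top⟩
  have hK0 : K ≠ 0 := by positivity
  rw [mul_comm K, ← ENNReal.div_le_iff hK0 hKtop]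
  have hanti : Antitone fun s : ℝ => hContent n β {x | ENNReal.ofReal s < g x} := fun _ _ hst =>
    hContent_mono n β fun _ hx => (ENNReal.ofReal_le_ofReal hst).trans_lt hx
  have hlevel := tsum_level_le_lintegral hanti hτ
  change _ ≤ 2 * choquet (hContent n β) g at hlevel
  refine ENNReal.le_of_forall_pos_le_add fun ε hε htop => ?_
  have hfin : ∀ k : ℕ, hContent n β {x | ENNReal.ofReal (τ * 2 ^ k) < g x} ≠ ∞ := fun k hk => by
    have h := ((ENNReal.le_tsum k).trans hlevel).trans_lt htop
    have hpos : ENNReal.ofReal (τ * 2 ^ k) ≠ 0 := (ENNReal.ofReal_pos.2 (by positivity)).ne'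
    simp only [hk, ENNReal.mul_top hpos, lt_self_iff_false] at h
  obtain ⟨δ, hδ, hδsum⟩ := ENNReal.exists_pos_tsum_mul_lt_of_countable
    (ENNReal.coe_ne_zero.2 hε.ne') (fun k : ℕ => ENNReal.ofReal (τ * 2 ^ k))
    fun _ => ENNReal.ofReal_ne_top
  choose z ρ hρ hcov hcost using fun k : ℕ => exists_cover_of_hContent_lt hβ
    (ENNReal.lt_add_right (hfin k) (ENNReal.coe_ne_zero.2 (hδ k).ne'))
  rw [ENNReal.div_le_iff hK0 hKtop, mul_comm _ K]
  refine (mul_hContent_maximalH_le_of_cover hβ hτ z ρ hρ hcov).trans ?_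
  gcongr
  calc _ ≤ ∑' k : ℕ, (ENNReal.ofReal (τ * 2 ^ k) *
          hContent n β {x | ENNReal.ofReal (τ * 2 ^ k) < g x} +
          ENNReal.ofReal (τ * 2 ^ k) * δ k) := by
        refine ENNReal.tsum_le_tsum fun k => ?_
        rw [← mul_add]
        gcongr
        exact (hcost k).le
    _ ≤ _ := by
        rw [ENNReal.tsum_add]
        exact add_le_add hlevel hδsum.le

/-- Weak-type `(1,1)` bound for the centered Hausdorff content
maximal function on `L^1(H^β_∞)`, `β ∈ (0,n)`. -/
theorem statement8 (n : ℕ) (β : ℝ) (hβ0 : 0 < β) (hβn : β < n) :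
    ∃ C : ℝ, 0 < C ∧ ∀ f : Rn n → ℝ, MemChoquetLp (hContent n β) 1 f →
      ∀ t : ℝ, 0 < t →
        hContent n β {x | ENNReal.ofReal t < maximalH n β (fun y => ENNReal.ofReal |f y|) x} ≤
          (ENNReal.ofReal C / ENNReal.ofReal t) *
            choquet (hContent n β) (fun x => ENNReal.ofReal |f x|) := by
  refine ⟨4 * (2 ^ β + 11 ^ β), by positivity, fun f _ t ht => ?_⟩
  have h := mul_hContent_maximalH_le hβ0 (fun y : Rn n => ENNReal.ofReal |f y|) (half_pos ht)
  rw [mul_div_cancel₀ t two_ne_zero] at h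
  have ht0 : ENNReal.ofReal t ≠ 0 := (ENNReal.ofReal_pos.2 ht).ne'
  rw [div_eq_mul_inv, mul_right_comm, ← div_eq_mul_inv,
    ENNReal.le_div_iff_mul_le (Or.inl ht0) (Or.inl ENNReal.ofReal_ne_top), mul_comm]
  calc _ = 2 * (ENNReal.ofReal (t / 2) * _) := by
        rw [← mul_assoc, ← ENNReal.ofReal_ofNat 2, ← ENNReal.ofReal_mul zero_le_two,
          mul_div_cancel₀ t two_ne_zero]
    _ ≤ _ := mul_le_mul_right h 2
    _ = _ := by
        rw [ENNReal.ofReal_mul zero_le_four, ENNReal.ofReal_add (by positivity) (by positivity),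
          ENNReal.ofReal_ofNat]
        ring

end
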